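/- Let a, b be positive real numbers with a ≠ b, let x₁, x₂ ∈ ℝ, λ ∈ ℂ and n, v₁, v₂ ∈ ℕ. Then binom(v₁+v₂, v₁)·S_{v₁+v₂}^n(x₁+x₂;a,b;λ) = Σ_{j=0}^{n} binom(n,j)·S_{v₁}^j(x₁;a,b;λ)·S_{v₂}^{n−j}(x₂;a,b;λ). -/

import Mathlib

open Finset

/-- The generalized array type polynomials. -/
noncomputable def arrayPoly (a b x : ℝ) (lam : ℂ) (n v : ℕ) : ℂ :=
  (1 / (v.factorial : ℂ)) * ∑ j ∈ range (v + 1),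
    (-1) ^ (v - j) * (v.choose j : ℂ) * lam ^ j *
      (((v - j : ℕ) : ℂ) * (Real.log a : ℂ) + ((x : ℂ) + (j : ℂ)) * (Real.log b : ℂ)) ^ n

/-!
Up to the factor `1 / v!`, the array polynomial is the `n`-th moment of the formal combination of
points `(λ [ln b] - [ln a]) ^ v * [x ln b]`, where the product is convolution. These combinations
are multiplicative in `(v, x)`, and the binomial theorem expresses the `n`-th moment of a
convolution through the moments of its factors.
-/

open AddMonoidAlgebra (single)
open scoped AddMonoidAlgebra

section Moment

variable {k A : Type*} [CommSemiring k] [CommSemiring A] [Algebra k A]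

/-- The `n`-th moment `∑ cᵢ aᵢ ^ n` of a finite formal combination `∑ cᵢ [aᵢ]` of points of `A`,
the elements of the convolution algebra `k[A]` being viewed as finitely supported measures. -/
noncomputable def moment (n : ℕ) : k[A] →ₗ[k] A :=
  Finsupp.linearCombination k (· ^ n) ∘ₗ (AddMonoidAlgebra.coeffLinearEquiv k).toLinearMap

lemma moment_single (n : ℕ) (a : A) (c : k) : moment n (single a c) = c • a ^ n := by
  simp [moment]

lemma moment_mul (n : ℕ) (f g : k[A]) :
    moment n (f * g) =
      ∑ j ∈ range (n + 1), (n.choose j : A) * moment j f * moment (n - j) g := by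
  induction f using AddMonoidAlgebra.induction_linear with
  | zero => simp
  | add f₁ f₂ ih₁ ih₂ => simp only [add_mul, mul_add, map_add, ih₁, ih₂, sum_add_distrib]
  | single a c =>
    induction g using AddMonoidAlgebra.induction_linear with
    | zero => simp
    | add g₁ g₂ ih₁ ih₂ => simp only [mul_add, map_add, ih₁, ih₂, sum_add_distrib]
    | single b d =>
      simp only [AddMonoidAlgebra.single_mul_single, moment_single, add_pow, smul_sum]
      refine sum_congr rfl fun j _ => ?_
      simp only [Algebra.smul_def, map_mul]
      ring

end Moment

section ArrayKernel

variable {R : Type*} [CommRing R]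

/-- The formal combination of points whose `n`-th moment is `v!` times the array polynomial of
index `v` and degree `n`; the parameters `α` and `β` play the roles of `ln a` and `ln b`. -/
noncomputable def arrayKernel (α β x lam : R) (v : ℕ) : R[R] :=
  (single β lam - single α 1) ^ v * single (x * β) 1

lemma arrayKernel_add (α β x₁ x₂ lam : R) (v₁ v₂ : ℕ) :
    arrayKernel α β (x₁ + x₂) lam (v₁ + v₂) =
      arrayKernel α β x₁ lam v₁ * arrayKernel α β x₂ lam v₂ := by
  have shift : (single ((x₁ + x₂) * β) 1 : R[R]) = single (x₁ * β) 1 * single (x₂ * β) 1 := by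
    rw [AddMonoidAlgebra.single_mul_single, add_mul, one_mul]
  rw [arrayKernel, arrayKernel, arrayKernel, shift, pow_add, mul_mul_mul_comm]

lemma arrayKernel_eq_sum (α β x lam : R) (v : ℕ) :
    arrayKernel α β x lam v =
      ∑ j ∈ range (v + 1),
        single ((v - j : ℕ) * α + (x + j) * β) ((-1) ^ (v - j) * (v.choose j : R) * lam ^ j) := by
  have neg_single : -(single α 1 : R[R]) = single α (-1) := by simp
  rw [arrayKernel, sub_eq_add_neg, neg_single, add_pow, sum_mul]
  refine sum_congr rfl fun j _ => ?_
  simp only [AddMonoidAlgebra.single_pow, AddMonoidAlgebra.natCast_def,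
    AddMonoidAlgebra.single_mul_single, nsmul_eq_mul]
  congr 1 <;> ring

lemma moment_arrayKernel (α β x lam : R) (n v : ℕ) :
    moment n (arrayKernel α β x lam v) =
      ∑ j ∈ range (v + 1), (-1) ^ (v - j) * (v.choose j : R) * lam ^ j *
        ((v - j : ℕ) * α + (x + j) * β) ^ n := by
  simp only [arrayKernel_eq_sum, map_sum, moment_single, smul_eq_mul]

end ArrayKernel

section RatAlgebra

variable {R : Type*} [CommRing R] [Algebra ℚ R]

/-- The array polynomials over an arbitrary commutative `ℚ`-algebra, with parameters `α` and `β`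
in place of `ln a` and `ln b`. -/
noncomputable def algebraicArrayPoly (α β x lam : R) (n v : ℕ) : R :=
  (v.factorial : ℚ)⁻¹ • ∑ j ∈ range (v + 1), (-1) ^ (v - j) * (v.choose j : R) * lam ^ j *
    ((v - j : ℕ) * α + (x + j) * β) ^ n

lemma algebraicArrayPoly_eq_moment (α β x lam : R) (n v : ℕ) :
    algebraicArrayPoly α β x lam n v =
      (v.factorial : ℚ)⁻¹ • moment n (arrayKernel α β x lam v) := by
  rw [algebraicArrayPoly, moment_arrayKernel]

theorem stmt_7_general (α β x₁ x₂ lam : R) (n v₁ v₂ : ℕ) :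
    ((v₁ + v₂).choose v₁ : R) * algebraicArrayPoly α β (x₁ + x₂) lam n (v₁ + v₂) =
      ∑ j ∈ range (n + 1), (n.choose j : R) * algebraicArrayPoly α β x₁ lam j v₁ *
        algebraicArrayPoly α β x₂ lam (n - j) v₂ := by
  have choose_mul_inv : ((v₁ + v₂).choose v₁ : ℚ) * ((v₁ + v₂).factorial : ℚ)⁻¹ =
      (v₁.factorial : ℚ)⁻¹ * (v₂.factorial : ℚ)⁻¹ := by
    rw [Nat.cast_add_choose]
    field_simp
  calc ((v₁ + v₂).choose v₁ : R) * algebraicArrayPoly α β (x₁ + x₂) lam n (v₁ + v₂)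
    _ = ((v₁.factorial : ℚ)⁻¹ * (v₂.factorial : ℚ)⁻¹) •
          moment n (arrayKernel α β x₁ lam v₁ * arrayKernel α β x₂ lam v₂) := by
      rw [algebraicArrayPoly_eq_moment, arrayKernel_add, ← choose_mul_inv, mul_smul,
        Nat.cast_smul_eq_nsmul, nsmul_eq_mul]
    _ = _ := by
      rw [moment_mul, smul_sum]
      simp only [algebraicArrayPoly_eq_moment, mul_smul_comm, smul_mul_assoc, smul_smul,
        mul_comm (v₁.factorial : ℚ)⁻¹]

end RatAlgebra

lemma arrayPoly_eq_algebraicArrayPoly (a b x : ℝ) (lam : ℂ) (n v : ℕ) :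
    arrayPoly a b x lam n v = algebraicArrayPoly (Real.log a : ℂ) (Real.log b) x lam n v := by
  simp [arrayPoly, algebraicArrayPoly, Algebra.smul_def]

theorem stmt_7 (a b : ℝ) (ha : 0 < a) (hb : 0 < b) (hab : a ≠ b) (x₁ x₂ : ℝ) (lam : ℂ)
    (n v₁ v₂ : ℕ) :
    ((v₁ + v₂).choose v₁ : ℂ) * arrayPoly a b (x₁ + x₂) lam n (v₁ + v₂) =
      ∑ j ∈ range (n + 1), (n.choose j : ℂ) * arrayPoly a b x₁ lam j v₁ *
        arrayPoly a b x₂ lam (n - j) v₂ := by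
  simp only [arrayPoly_eq_algebraicArrayPoly, Complex.ofReal_add, stmt_7_general]
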